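/- A continuous linear map T between C*-algebras preserves Jordan triple products (i.e., T{a,b,c} = {Ta,Tb,Tc} for all a,b,c) if and only if it preserves cubes, i.e., T(aa*a) = (Ta)(Ta)*(Ta) for all a. -/

import Mathlib

/-!
The triple product is recovered from its diagonal in two polarizations. Since `x * star y * z` is
conjugate-linear in `y`, summing `ω • (x + ω • y) * star (x + ω • y) * (x + ω • y)` over the fourth
roots of unity `ω` kills every term of the expansion except `x * star y * x`, the only one whose
coefficient is `ω * star ω = 1`. The triple product is then the symmetric bilinear form belonging
to the quadratic map `x ↦ x * star y * x`. A linear map preserving cubes respects both formulas.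
-/

section Polarization

variable {A : Type*} [NonUnitalNonAssocRing A]

theorem mul_mul_add_mul_mul_swap (x y z : A) :
    x * y * z + z * y * x = (x + z) * y * (x + z) - x * y * x - z * y * z := by
  simp only [add_mul, mul_add]
  abel

variable [StarRing A] [Module ℂ A]

/-- The Jordan triple product `{a, b, c} = (ab*c + cb*a) / 2` on a complex star algebra, which is
conjugate-linear in the middle variable. Products are bracketed to the left, a choice that matters
because `A` may be nonassociative. -/
noncomputable def jordanTriple (a b c : A) : A :=
  (1 / 2 : ℂ) • (a * star b * c + c * star b * a)

theorem jordanTriple_self (a : A) : jordanTriple a a a = a * star a * a := by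
  rw [jordanTriple, ← two_smul ℂ, smul_smul, one_div, inv_mul_cancel₀ two_ne_zero, one_smul]

theorem jordanTriple_eq_smul_sub (a b c : A) :
    jordanTriple a b c =
      (1 / 2 : ℂ) • ((a + c) * star b * (a + c) - a * star b * a - c * star b * c) := by
  rw [jordanTriple, mul_mul_add_mul_mul_swap]

variable [IsScalarTower ℂ A A] [SMulCommClass ℂ A A] [StarModule ℂ A]

theorem four_smul_mul_star_mul_eq_cubes (x y : A) :
    (4 : ℂ) • (x * star y * x) =
      (x + y) * star (x + y) * (x + y) - (x - y) * star (x - y) * (x - y) +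
        Complex.I • ((x + Complex.I • y) * star (x + Complex.I • y) * (x + Complex.I • y)) -
        Complex.I • ((x - Complex.I • y) * star (x - Complex.I • y) * (x - Complex.I • y)) := by
  have star_I : star Complex.I = -Complex.I := Complex.conj_I
  simp only [star_add, star_sub, star_smul, star_I, add_mul, mul_add, sub_mul, mul_sub,
    smul_mul_assoc, mul_smul_comm, smul_add, smul_sub, smul_smul, neg_smul, neg_mul, mul_neg,
    smul_neg, Complex.I_mul_I, neg_neg, one_smul]
  module

end Polarization

section LinearMap

variable {A B : Type*}
  [NonUnitalNonAssocRing A] [StarRing A] [Module ℂ A]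
  [NonUnitalNonAssocRing B] [StarRing B] [Module ℂ B]

theorem map_jordanTriple_of_map_mul_star_mul (T : A →ₗ[ℂ] B)
    (hT : ∀ x y : A, T (x * star y * x) = T x * star (T y) * T x) (a b c : A) :
    T (jordanTriple a b c) = jordanTriple (T a) (T b) (T c) := by
  simp only [jordanTriple_eq_smul_sub, map_smul, map_sub, hT, map_add]

variable
  [IsScalarTower ℂ A A] [SMulCommClass ℂ A A] [StarModule ℂ A]
  [IsScalarTower ℂ B B] [SMulCommClass ℂ B B] [StarModule ℂ B]

theorem map_mul_star_mul_of_map_cube (T : A →ₗ[ℂ] B)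
    (hT : ∀ a : A, T (a * star a * a) = T a * star (T a) * T a) (x y : A) :
    T (x * star y * x) = T x * star (T y) * T x := by
  apply smul_right_injective B (by norm_num : (4 : ℂ) ≠ 0)
  calc (4 : ℂ) • T (x * star y * x)
      = T ((4 : ℂ) • (x * star y * x)) := (map_smul T _ _).symm
    _ = (4 : ℂ) • (T x * star (T y) * T x) := by
      simp only [four_smul_mul_star_mul_eq_cubes, map_add, map_sub, map_smul, hT]

theorem triple_hom_iff_cube_preserving_general (T : A →ₗ[ℂ] B) :
    (∀ a b c : A, T (jordanTriple a b c) = jordanTriple (T a) (T b) (T c)) ↔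
      ∀ a : A, T (a * star a * a) = T a * star (T a) * T a := by
  constructor
  · intro hT a
    simpa only [jordanTriple_self] using hT a a a
  · intro hT
    exact map_jordanTriple_of_map_mul_star_mul T (map_mul_star_mul_of_map_cube T hT)

end LinearMap

/-- A continuous linear map between C*-algebras preserves Jordan triple products
`{a,b,c} = (ab*c + cb*a)/2` iff it preserves cubes `a ↦ aa*a`. -/
theorem triple_hom_iff_cube_preserving
    {A B : Type*} [NormedRing A] [StarRing A] [CStarRing A]
    [NormedAlgebra ℂ A] [StarModule ℂ A] [CompleteSpace A]
    [NormedRing B] [StarRing B] [CStarRing B]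
    [NormedAlgebra ℂ B] [StarModule ℂ B] [CompleteSpace B]
    (T : A →L[ℂ] B) :
    (∀ a b c : A, T ((1 / 2 : ℂ) • (a * star b * c + c * star b * a)) =
        (1 / 2 : ℂ) • (T a * star (T b) * T c + T c * star (T b) * T a)) ↔
      (∀ a : A, T (a * star a * a) = T a * star (T a) * T a) :=
  triple_hom_iff_cube_preserving_general (T : A →ₗ[ℂ] B)
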